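/- arXiv:2412.16273 — 6 statements merged into one kernel-verified Lean document; each statement's English description precedes it below -/
import Mathlib

section
/- Let A be a complex vector space and let ∘ and ∗ be two bilinear operations on A each making A an anti-pre-Lie algebra. Then (A,∘,∗) is a compatible anti-pre-Lie algebra (i.e., for all scalars k₁,k₂ ∈ ℂ the operation x⋆y = k₁(x∘y)+k₂(x∗y) makes A an anti-pre-Lie algebra) if and only if for all x,y,z ∈ A the following two identities hold: (i) x∘(y∗z)+x∗(y∘z)−y∘(x∗z)−y∗(x∘z) = [y,x]₂∘z + [y,x]₁∗z, and (ii) [x,y]₂∘z + [x,y]₁∗z + [y,z]₂∘x + [y,z]₁∗x + [z,x]₂∘y + [z,x]₁∗y = 0, where [x,y]₁ = x∘y−y∘x and [x,y]₂ = x∗y−y∗x. -/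
/-- An anti-pre-Lie algebra structure: a bilinear operation `m` satisfying
`x∗(y∗z) − y∗(x∗z) = [y,x]∗z` and `[x,y]∗z + [y,z]∗x + [z,x]∗y = 0`,
where `[x,y] = x∗y − y∗x`. -/
def IsAntiPreLie {A : Type*} [AddCommGroup A] [Module ℂ A]
    (m : A →ₗ[ℂ] A →ₗ[ℂ] A) : Prop :=
  (∀ x y z : A, m x (m y z) - m y (m x z) = m (m y x - m x y) z) ∧
  (∀ x y z : A, m (m x y - m y x) z + m (m y z - m z y) x + m (m z x - m x z) y = 0)

/-!
The two anti-pre-Lie axioms are homogeneous quadratic equations in the operation. A quadratic map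
vanishing at `c` and `s` vanishes on every combination `k₁ • c + k₂ • s` exactly when its polar form
vanishes at `(c, s)`, and the polar forms of the two axioms are the two mixed identities.
-/

open QuadraticMap LinearMap.BilinMap

theorem forall_quadraticMap_smul_add_smul_eq_zero_iff {R M N : Type*} [CommRing R]
    [AddCommGroup M] [Module R M] [AddCommGroup N] [Module R N] (Q : QuadraticMap R M N)
    {x y : M} (hx : Q x = 0) (hy : Q y = 0) :
    (∀ a b : R, Q (a • x + b • y) = 0) ↔ polar Q x y = 0 := by
  have expansion (a b : R) : Q (a • x + b • y) = a • b • polar Q x y := by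
    rw [QuadraticMap.map_add Q, QuadraticMap.map_smul, QuadraticMap.map_smul, polar_smul_left,
      polar_smul_right, hx, hy, smul_zero, smul_zero, zero_add, zero_add]
  refine ⟨fun h => ?_, fun h a b => ?_⟩
  · simpa only [one_smul] using (expansion 1 1).symm.trans (h 1 1)
  · rw [expansion, h, smul_zero, smul_zero]

section Defects

variable {R A : Type*} [CommRing R] [AddCommGroup A] [Module R A]

/-- Anti-pre-Lie operations, as in `IsAntiPreLie`, over an arbitrary commutative ring. -/
def IsAntiPreLieOver (m : A →ₗ[R] A →ₗ[R] A) : Prop :=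
  (∀ x y z : A, m x (m y z) - m y (m x z) = m (m y x - m x y) z) ∧
  (∀ x y z : A, m (m x y - m y x) z + m (m y z - m z y) x + m (m z x - m x z) y = 0)

variable (R A) in
/-- The failure of the first anti-pre-Lie axiom `x∗(y∗z) − y∗(x∗z) = [y,x]∗z`, made bilinear by
letting the outer and inner products be different operations `c` and `s`; on the diagonal it is the
defect of a single operation. -/
def antiLeftSymmDefect : LinearMap.BilinMap R (A →ₗ[R] A →ₗ[R] A) (A → A → A → A) :=
  LinearMap.mk₂ R (fun c s x y z => c x (s y z) - c y (s x z) - c (s y x - s x y) z)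
    (fun c c' s => by ext x y z; simp only [LinearMap.add_apply, Pi.add_apply]; abel)
    (fun k c s => by ext x y z; simp only [LinearMap.smul_apply, Pi.smul_apply, smul_sub])
    (fun c s s' => by
      ext x y z
      simp only [LinearMap.add_apply, LinearMap.sub_apply, Pi.add_apply, map_add, map_sub]
      abel)
    (fun k c s => by
      ext x y z
      simp only [LinearMap.smul_apply, LinearMap.sub_apply, Pi.smul_apply, map_smul, map_sub,
        smul_sub])

variable (R A) in
/-- The cyclic sum `[x,y]∗z + [y,z]∗x + [z,x]∗y` of the second anti-pre-Lie axiom, made bilinear by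
taking the commutators with respect to a second operation `s`. -/
def commutatorCyclicSum : LinearMap.BilinMap R (A →ₗ[R] A →ₗ[R] A) (A → A → A → A) :=
  LinearMap.mk₂ R
    (fun c s x y z => c (s x y - s y x) z + c (s y z - s z y) x + c (s z x - s x z) y)
    (fun c c' s => by ext x y z; simp only [LinearMap.add_apply, Pi.add_apply]; abel)
    (fun k c s => by ext x y z; simp only [LinearMap.smul_apply, Pi.smul_apply, smul_add])
    (fun c s s' => by
      ext x y z
      simp only [LinearMap.add_apply, LinearMap.sub_apply, Pi.add_apply, map_add, map_sub]
      abel)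
    (fun k c s => by
      ext x y z
      simp only [LinearMap.smul_apply, LinearMap.sub_apply, Pi.smul_apply, map_smul, map_sub,
        smul_add, smul_sub])

theorem isAntiPreLieOver_iff_toQuadraticMap_eq_zero (m : A →ₗ[R] A →ₗ[R] A) :
    IsAntiPreLieOver m ↔ (antiLeftSymmDefect R A).toQuadraticMap m = 0 ∧
      (commutatorCyclicSum R A).toQuadraticMap m = 0 := by
  simp only [IsAntiPreLieOver, toQuadraticMap_apply, antiLeftSymmDefect, commutatorCyclicSum,
    LinearMap.mk₂_apply, funext_iff, Pi.zero_apply, sub_eq_zero]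

theorem polar_antiLeftSymmDefect_eq_zero_iff (c s : A →ₗ[R] A →ₗ[R] A) :
    polar (antiLeftSymmDefect R A).toQuadraticMap c s = 0 ↔
      ∀ x y z : A,
        c x (s y z) + s x (c y z) - c y (s x z) - s y (c x z)
          = c (s y x - s x y) z + s (c y x - c x y) z := by
  simp only [polar_toQuadraticMap, antiLeftSymmDefect, LinearMap.mk₂_apply, funext_iff,
    Pi.add_apply, Pi.zero_apply]
  refine forall₃_congr fun x y z => ?_
  rw [← sub_eq_zero (b := c (s y x - s x y) z + s (c y x - c x y) z)]
  apply Eq.congr_left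
  abel

theorem polar_commutatorCyclicSum_eq_zero_iff (c s : A →ₗ[R] A →ₗ[R] A) :
    polar (commutatorCyclicSum R A).toQuadraticMap c s = 0 ↔
      ∀ x y z : A,
        c (s x y - s y x) z + s (c x y - c y x) z
          + c (s y z - s z y) x + s (c y z - c z y) x
          + c (s z x - s x z) y + s (c z x - c x z) y = 0 := by
  simp only [polar_toQuadraticMap, commutatorCyclicSum, LinearMap.mk₂_apply, funext_iff,
    Pi.add_apply, Pi.zero_apply]
  refine forall₃_congr fun x y z => Eq.congr_left ?_
  abel

theorem compatible_antiPreLie_iff_general (c s : A →ₗ[R] A →ₗ[R] A)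
    (hc : IsAntiPreLieOver c) (hs : IsAntiPreLieOver s) :
    (∀ k₁ k₂ : R, IsAntiPreLieOver (k₁ • c + k₂ • s)) ↔
      ((∀ x y z : A,
          c x (s y z) + s x (c y z) - c y (s x z) - s y (c x z)
            = c (s y x - s x y) z + s (c y x - c x y) z) ∧
       (∀ x y z : A,
          c (s x y - s y x) z + s (c x y - c y x) z
            + c (s y z - s z y) x + s (c y z - c z y) x
            + c (s z x - s x z) y + s (c z x - c x z) y = 0)) := by
  obtain ⟨hc_symm, hc_cyclic⟩ := (isAntiPreLieOver_iff_toQuadraticMap_eq_zero c).mp hc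
  obtain ⟨hs_symm, hs_cyclic⟩ := (isAntiPreLieOver_iff_toQuadraticMap_eq_zero s).mp hs
  simp only [isAntiPreLieOver_iff_toQuadraticMap_eq_zero, forall_and]
  rw [forall_quadraticMap_smul_add_smul_eq_zero_iff _ hc_symm hs_symm,
    forall_quadraticMap_smul_add_smul_eq_zero_iff _ hc_cyclic hs_cyclic,
    polar_antiLeftSymmDefect_eq_zero_iff, polar_commutatorCyclicSum_eq_zero_iff]

end Defects

/-- For two anti-pre-Lie operations `∘ = c` and `∗ = s` on a complex vector
space `A`, the pair is a compatible anti-pre-Lie algebra (every linear combination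
`k₁ • c + k₂ • s` is anti-pre-Lie) iff the two mixed identities hold. -/
theorem compatible_antiPreLie_iff {A : Type*} [AddCommGroup A] [Module ℂ A]
    (c s : A →ₗ[ℂ] A →ₗ[ℂ] A) (hc : IsAntiPreLie c) (hs : IsAntiPreLie s) :
    (∀ k₁ k₂ : ℂ, IsAntiPreLie (k₁ • c + k₂ • s)) ↔
      ((∀ x y z : A,
          c x (s y z) + s x (c y z) - c y (s x z) - s y (c x z)
            = c (s y x - s x y) z + s (c y x - c x y) z) ∧
       (∀ x y z : A,
          c (s x y - s y x) z + s (c x y - c y x) z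
            + c (s y z - s z y) x + s (c y z - c z y) x
            + c (s z x - s x z) y + s (c z x - c x z) y = 0)) :=
  compatible_antiPreLie_iff_general c s hc hs
end

section
/- Let (A,∘,∗) be a compatible anti-pre-Lie algebra, and define [x,y]₁ = x∘y−y∘x, [x,y]₂ = x∗y−y∗x, and the left multiplication operators L∘(x)y = x∘y and L∗(x)y = x∗y. Then (−L∘, −L∗, A) is a representation of the sub-adjacent compatible Lie algebra; explicitly, for all x,y ∈ A the following hold as operators on A: (1) −L∘([x,y]₁) = L∘(x)L∘(y) − L∘(y)L∘(x), (2) −L∗([x,y]₂) = L∗(x)L∗(y) − L∗(y)L∗(x), and (3) −L∘([x,y]₂) − L∗([x,y]₁) = L∘(x)L∗(y) − L∘(y)L∗(x) + L∗(x)L∘(y) − L∗(y)L∘(x). -/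
/-- The first of the two anti-pre-Lie identities, which involves left multiplications only. -/
def IsAntiLeftSymmetric {R A : Type*} [CommSemiring R] [AddCommGroup A] [Module R A]
    (m : A →ₗ[R] A →ₗ[R] A) : Prop :=
  ∀ x y z : A, m x (m y z) - m y (m x z) = m (m y x - m x y) z

theorem IsAntiPreLie.isAntiLeftSymmetric {A : Type*} [AddCommGroup A] [Module ℂ A]
    {m : A →ₗ[ℂ] A →ₗ[ℂ] A} (hm : IsAntiPreLie m) : IsAntiLeftSymmetric m :=
  hm.1

section

variable {R A : Type*} [CommSemiring R] [AddCommGroup A] [Module R A]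

/-- On the diagonal `n = m`, the failure of `x ↦ -m x` to represent the commutator of `m`. The two
occurrences of `m` are separated to make the expression bilinear in `(m, n)`, so that the mixed
identity for a compatible pair arises by polarization. -/
def negLeftMulDefect (m n : A →ₗ[R] A →ₗ[R] A) (x y : A) : A →ₗ[R] A :=
  m (n x y - n y x) + (m x ∘ₗ n y - m y ∘ₗ n x)

theorem negLeftMulDefect_add_left (m m' n : A →ₗ[R] A →ₗ[R] A) (x y : A) :
    negLeftMulDefect (m + m') n x y = negLeftMulDefect m n x y + negLeftMulDefect m' n x y := by
  simp only [negLeftMulDefect, LinearMap.add_apply, LinearMap.add_comp]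
  abel

theorem negLeftMulDefect_add_right (m n n' : A →ₗ[R] A →ₗ[R] A) (x y : A) :
    negLeftMulDefect m (n + n') x y = negLeftMulDefect m n x y + negLeftMulDefect m n' x y := by
  simp only [negLeftMulDefect, LinearMap.add_apply, LinearMap.comp_add, map_add, map_sub]
  abel

theorem IsAntiLeftSymmetric.negLeftMulDefect_self_eq_zero {m : A →ₗ[R] A →ₗ[R] A}
    (hm : IsAntiLeftSymmetric m) (x y : A) : negLeftMulDefect m m x y = 0 := by
  ext z
  calc
    m (m x y - m y x) z + (m x (m y z) - m y (m x z))
      = m (m x y - m y x) z + m (m y x - m x y) z := by rw [hm x y z]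
    _ = m ((m x y - m y x) + (m y x - m x y)) z := by rw [map_add, LinearMap.add_apply]
    _ = 0 := by rw [sub_add_sub_cancel, sub_self, map_zero, LinearMap.zero_apply]

theorem negLeftMulDefect_add_swap_eq_zero {c s : A →ₗ[R] A →ₗ[R] A} (hc : IsAntiLeftSymmetric c)
    (hs : IsAntiLeftSymmetric s) (hcs : IsAntiLeftSymmetric (c + s)) (x y : A) :
    negLeftMulDefect c s x y + negLeftMulDefect s c x y = 0 := by
  have expansion := hcs.negLeftMulDefect_self_eq_zero x y
  rwa [negLeftMulDefect_add_left, negLeftMulDefect_add_right, negLeftMulDefect_add_right,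
    hc.negLeftMulDefect_self_eq_zero, hs.negLeftMulDefect_self_eq_zero, zero_add,
    add_zero] at expansion

theorem neg_left_mul_representation_general (c s : A →ₗ[R] A →ₗ[R] A)
    (hc : IsAntiLeftSymmetric c) (hs : IsAntiLeftSymmetric s)
    (hcs : IsAntiLeftSymmetric (c + s)) :
    (∀ x y : A, -(c (c x y - c y x)) = c x ∘ₗ c y - c y ∘ₗ c x) ∧
    (∀ x y : A, -(s (s x y - s y x)) = s x ∘ₗ s y - s y ∘ₗ s x) ∧
    (∀ x y : A, -(c (s x y - s y x)) - s (c x y - c y x)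
        = c x ∘ₗ s y - c y ∘ₗ s x + s x ∘ₗ c y - s y ∘ₗ c x) := by
  refine ⟨fun x y => neg_eq_of_add_eq_zero_right (hc.negLeftMulDefect_self_eq_zero x y),
    fun x y => neg_eq_of_add_eq_zero_right (hs.negLeftMulDefect_self_eq_zero x y), fun x y => ?_⟩
  have mixed := negLeftMulDefect_add_swap_eq_zero hc hs hcs x y
  rw [negLeftMulDefect, negLeftMulDefect, add_add_add_comm] at mixed
  rw [← neg_add', add_sub_assoc]
  exact neg_eq_of_add_eq_zero_right mixed

end

/-- If `(A, ∘ = c, ∗ = s)` is a compatible anti-pre-Lie algebra, then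
`(−L∘, −L∗, A)` is a representation of the sub-adjacent compatible Lie algebra:
(1) `−L∘([x,y]₁) = L∘(x)L∘(y) − L∘(y)L∘(x)`,
(2) `−L∗([x,y]₂) = L∗(x)L∗(y) − L∗(y)L∗(x)`,
(3) `−L∘([x,y]₂) − L∗([x,y]₁) = L∘(x)L∗(y) − L∘(y)L∗(x) + L∗(x)L∘(y) − L∗(y)L∘(x)`,
as operators on `A`, where `[x,y]₁ = x∘y−y∘x`, `[x,y]₂ = x∗y−y∗x`. -/
theorem neg_left_mul_representation {A : Type*} [AddCommGroup A] [Module ℂ A]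
    (c s : A →ₗ[ℂ] A →ₗ[ℂ] A)
    (h : ∀ k₁ k₂ : ℂ, IsAntiPreLie (k₁ • c + k₂ • s)) :
    (∀ x y : A, -(c (c x y - c y x)) = c x ∘ₗ c y - c y ∘ₗ c x) ∧
    (∀ x y : A, -(s (s x y - s y x)) = s x ∘ₗ s y - s y ∘ₗ s x) ∧
    (∀ x y : A, -(c (s x y - s y x)) - s (c x y - c y x)
        = c x ∘ₗ s y - c y ∘ₗ s x + s x ∘ₗ c y - s y ∘ₗ c x) := by
  exact neg_left_mul_representation_general c s (by simpa using (h 1 0).isAntiLeftSymmetric)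
    (by simpa using (h 0 1).isAntiLeftSymmetric) (by simpa using (h 1 1).isAntiLeftSymmetric)
end

section
/- Let (A,∘,∗) be a compatible anti-pre-Lie algebra and set [x,y]₁ = x∘y−y∘x and [x,y]₂ = x∗y−y∗x. Then (A,[-,-]₁,[-,-]₂) is a compatible Lie algebra: each of [-,-]₁ and [-,-]₂ is a Lie bracket on A, and the mixed Jacobi identity [[x,y]₁,z]₂ + [[y,z]₁,x]₂ + [[z,x]₁,y]₂ + [[x,y]₂,z]₁ + [[y,z]₂,x]₁ + [[z,x]₂,y]₁ = 0 holds for all x,y,z ∈ A; equivalently, every linear combination k₁[-,-]₁ + k₂[-,-]₂ (k₁,k₂ ∈ ℂ) is a Lie bracket on A. -/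
/-- A bilinear operation is a Lie bracket: antisymmetric and satisfies the Jacobi
identity. -/
def IsLieBr {A : Type*} [AddCommGroup A] [Module ℂ A]
    (b : A →ₗ[ℂ] A →ₗ[ℂ] A) : Prop :=
  (∀ x y : A, b x y = -b y x) ∧
  (∀ x y z : A, b (b x y) z + b (b y z) x + b (b z x) y = 0)

/-!
Summing the first anti-pre-Lie identity cyclically gives `∑ z∗[x,y] = -∑ [x,y]∗z`, and the second
identity says that the right-hand side vanishes; subtracting the two vanishing sums gives the
Jacobi identity for the commutator. The commutator is linear in the product, so it turns linear
combinations of products into linear combinations of brackets, and the mixed identity is the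
polarization of the Jacobi identity.
-/

section CommutatorBracket

variable {R A : Type*} [CommRing R] [AddCommGroup A] [Module R A]

/-- Anti-pre-Lie products over an arbitrary commutative ring; `IsAntiPreLie` is the case of `ℂ`. -/
structure IsAntiPreLieProduct (m : A →ₗ[R] A →ₗ[R] A) : Prop where
  mul_mul_sub_mul_mul : ∀ x y z : A, m x (m y z) - m y (m x z) = m (m y x - m x y) z
  cyclic_commutator_mul : ∀ x y z : A,
    m (m x y - m y x) z + m (m y z - m z y) x + m (m z x - m x z) y = 0

/-- The Jacobi identity for a bilinear operation, in the cyclic form `∑ [[x, y], z] = 0`. -/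
def SatisfiesJacobi (b : A →ₗ[R] A →ₗ[R] A) : Prop :=
  ∀ x y z : A, b (b x y) z + b (b y z) x + b (b z x) y = 0

/-- Lie brackets over an arbitrary commutative ring. Unlike in `IsLieBr`, the bracket is required to
be alternating, which is stronger than antisymmetry when `2` is not cancellable. -/
structure IsLieBracket (b : A →ₗ[R] A →ₗ[R] A) : Prop where
  isAlt : b.IsAlt
  jacobi : SatisfiesJacobi b

/-- The commutator `[x, y] = m x y - m y x` of a bilinear operation `m`, bundled as a linear map
in `m` so that it commutes with linear combinations of operations. -/
def commutatorBracket : (A →ₗ[R] A →ₗ[R] A) →ₗ[R] A →ₗ[R] A →ₗ[R] A :=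
  LinearMap.id - LinearMap.lflip.toLinearMap

theorem commutatorBracket_apply (m : A →ₗ[R] A →ₗ[R] A) (x y : A) :
    commutatorBracket m x y = m x y - m y x :=
  rfl

theorem commutatorBracket_isAlt (m : A →ₗ[R] A →ₗ[R] A) : (commutatorBracket m).IsAlt :=
  fun x => sub_self (m x x)

theorem IsAntiPreLieProduct.cyclic_mul_commutatorBracket {m : A →ₗ[R] A →ₗ[R] A}
    (hm : IsAntiPreLieProduct m) (x y z : A) :
    m z (commutatorBracket m x y) + m x (commutatorBracket m y z)
      + m y (commutatorBracket m z x) = 0 := by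
  simp only [commutatorBracket_apply, map_sub]
  calc m z (m x y) - m z (m y x) + (m x (m y z) - m x (m z y)) + (m y (m z x) - m y (m x z))
    _ = (m x (m y z) - m y (m x z)) + (m y (m z x) - m z (m y x))
          + (m z (m x y) - m x (m z y)) := by abel
    _ = m (m y x - m x y) z + m (m z y - m y z) x + m (m x z - m z x) y := by
      simp only [hm.mul_mul_sub_mul_mul]
    _ = -(m (m x y - m y x) z + m (m y z - m z y) x + m (m z x - m x z) y) := by
      simp only [map_sub, LinearMap.sub_apply]
      abel
    _ = 0 := by rw [hm.cyclic_commutator_mul, neg_zero]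

theorem IsAntiPreLieProduct.isLieBracket_commutatorBracket {m : A →ₗ[R] A →ₗ[R] A}
    (hm : IsAntiPreLieProduct m) : IsLieBracket (commutatorBracket m) where
  isAlt := commutatorBracket_isAlt m
  jacobi x y z := by
    let b := commutatorBracket m
    calc b (b x y) z + b (b y z) x + b (b z x) y
      _ = (m (b x y) z - m z (b x y)) + (m (b y z) x - m x (b y z))
            + (m (b z x) y - m y (b z x)) := rfl
      _ = (m (b x y) z + m (b y z) x + m (b z x) y)
            - (m z (b x y) + m x (b y z) + m y (b z x)) := by abel
      _ = 0 - 0 := congrArg₂ (· - ·) (hm.cyclic_commutator_mul x y z)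
            (hm.cyclic_mul_commutatorBracket x y z)
      _ = 0 := sub_zero 0

theorem SatisfiesJacobi.mixed {b₁ b₂ : A →ₗ[R] A →ₗ[R] A} (h₁ : SatisfiesJacobi b₁)
    (h₂ : SatisfiesJacobi b₂) (h : SatisfiesJacobi (b₁ + b₂)) (x y z : A) :
    b₂ (b₁ x y) z + b₂ (b₁ y z) x + b₂ (b₁ z x) y
      + b₁ (b₂ x y) z + b₁ (b₂ y z) x + b₁ (b₂ z x) y = 0 := by
  have jacobi_add := h x y z
  simp only [LinearMap.add_apply, map_add] at jacobi_add
  linear_combination (norm := module) jacobi_add - h₁ x y z - h₂ x y z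

theorem subadjacent_compatible_lie_general (c s : A →ₗ[R] A →ₗ[R] A)
    (h : ∀ k₁ k₂ : R, IsAntiPreLieProduct (k₁ • c + k₂ • s))
    (b₁ b₂ : A →ₗ[R] A →ₗ[R] A)
    (hb₁ : ∀ x y : A, b₁ x y = c x y - c y x)
    (hb₂ : ∀ x y : A, b₂ x y = s x y - s y x) :
    IsLieBracket b₁ ∧ IsLieBracket b₂ ∧
    (∀ x y z : A,
      b₂ (b₁ x y) z + b₂ (b₁ y z) x + b₂ (b₁ z x) y
        + b₁ (b₂ x y) z + b₁ (b₂ y z) x + b₁ (b₂ z x) y = 0) ∧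
    (∀ k₁ k₂ : R, IsLieBracket (k₁ • b₁ + k₂ • b₂)) := by
  obtain rfl : b₁ = commutatorBracket c := LinearMap.ext₂ hb₁
  obtain rfl : b₂ = commutatorBracket s := LinearMap.ext₂ hb₂
  have lie (k₁ k₂ : R) : IsLieBracket (k₁ • commutatorBracket c + k₂ • commutatorBracket s) := by
    simpa only [map_add, map_smul] using (h k₁ k₂).isLieBracket_commutatorBracket
  have lie₁ : IsLieBracket (commutatorBracket c) := by simpa using lie 1 0
  have lie₂ : IsLieBracket (commutatorBracket s) := by simpa using lie 0 1
  have lie_add : IsLieBracket (commutatorBracket c + commutatorBracket s) := by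
    simpa only [one_smul] using lie 1 1
  exact ⟨lie₁, lie₂, lie₁.jacobi.mixed lie₂.jacobi lie_add.jacobi, lie⟩

end CommutatorBracket

section Complex

variable {A : Type*} [AddCommGroup A] [Module ℂ A]

theorem IsAntiPreLie.isAntiPreLieProduct {m : A →ₗ[ℂ] A →ₗ[ℂ] A} (hm : IsAntiPreLie m) :
    IsAntiPreLieProduct m :=
  ⟨hm.1, hm.2⟩

theorem IsLieBracket.isLieBr {b : A →ₗ[ℂ] A →ₗ[ℂ] A} (hb : IsLieBracket b) : IsLieBr b :=
  ⟨fun x y => (hb.isAlt.neg y x).symm, hb.jacobi⟩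

end Complex

/-- The commutator brackets `[x,y]₁ = x∘y − y∘x`, `[x,y]₂ = x∗y − y∗x`
of a compatible anti-pre-Lie algebra form a compatible Lie algebra: each is a Lie
bracket, the mixed Jacobi identity holds, and every linear combination of them is a
Lie bracket. -/
theorem subadjacent_compatible_lie {A : Type*} [AddCommGroup A] [Module ℂ A]
    (c s : A →ₗ[ℂ] A →ₗ[ℂ] A)
    (h : ∀ k₁ k₂ : ℂ, IsAntiPreLie (k₁ • c + k₂ • s))
    (b₁ b₂ : A →ₗ[ℂ] A →ₗ[ℂ] A)
    (hb₁ : ∀ x y : A, b₁ x y = c x y - c y x)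
    (hb₂ : ∀ x y : A, b₂ x y = s x y - s y x) :
    IsLieBr b₁ ∧ IsLieBr b₂ ∧
    (∀ x y z : A,
      b₂ (b₁ x y) z + b₂ (b₁ y z) x + b₂ (b₁ z x) y
        + b₁ (b₂ x y) z + b₁ (b₂ y z) x + b₁ (b₂ z x) y = 0) ∧
    (∀ k₁ k₂ : ℂ, IsLieBr (k₁ • b₁ + k₂ • b₂)) := by
  obtain ⟨lie₁, lie₂, mixed, lie⟩ := subadjacent_compatible_lie_general c s
    (fun k₁ k₂ => (h k₁ k₂).isAntiPreLieProduct) b₁ b₂ hb₁ hb₂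
  exact ⟨lie₁.isLieBr, lie₂.isLieBr, mixed, fun k₁ k₂ => (lie k₁ k₂).isLieBr⟩
end

section
/- Let (A,∘,∗) be a finite-dimensional compatible anti-pre-Lie algebra over ℂ, with commutator brackets [x,y]₁ = x∘y−y∘x and [x,y]₂ = x∗y−y∗x, left multiplications L∘(x)y = x∘y, L∗(x)y = x∗y, and dual adjoint actions on A* given by ⟨ad₁*(x)a*, y⟩ = −⟨a*, [x,y]₁⟩ and ⟨ad₂*(x)a*, y⟩ = −⟨a*, [x,y]₂⟩. Then there exists a nondegenerate invariant bilinear form on (A,∘,∗) if and only if there exists a linear isomorphism φ : A → A* with φ(−L∘(x)y) = ad₁*(x)φ(y) and φ(−L∗(x)y) = ad₂*(x)φ(y) for all x,y ∈ A (i.e., (−L∘,−L∗,A) and (ad₁*,ad₂*,A*) are equivalent as representations of the sub-adjacent compatible Lie algebra). -/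
/-!
A bilinear form on `A` is the same thing as a linear map `A → A*`, and in finite dimension it is
nondegenerate exactly when this map is an isomorphism. Invariance says that `[x, ·]` is the right
adjoint of left multiplication by `x`; read as an identity of maps `A → A*` and negated on both
sides, this is the intertwining condition between `-L` and `ad*`.
-/

open LinearMap Module

section CommRing

variable {R A : Type*} [CommRing R] [AddCommGroup A] [Module R A]

/-- The adjoint action `x ↦ [x, ·]` of the commutator bracket `[x, y] = m x y - m y x` of a bilinear
product `m`. -/
def commutatorAd (m : A →ₗ[R] A →ₗ[R] A) : A →ₗ[R] End R A :=
  m - m.flip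

/-- The coadjoint action `ad*` of the commutator bracket of `m`, dual to `commutatorAd m`:
`⟨ad* x f, y⟩ = -⟨f, [x, y]⟩`. -/
def commutatorCoad (m : A →ₗ[R] A →ₗ[R] A) : A →ₗ[R] End R (Dual R A) :=
  Dual.transpose ∘ₗ (-commutatorAd m)

/-- Invariance of the bilinear form `B` under the product `m`: each left multiplication `m x` has
`[x, ·]` as its right adjoint, i.e. `B (m x y) z = B y [x, z]`. -/
def IsInvariantForm (m : A →ₗ[R] A →ₗ[R] A) (B : A →ₗ[R] Dual R A) : Prop :=
  ∀ x, IsAdjointPair B B (m x) (commutatorAd m x)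

/-- The linear map `φ : A → A*` intertwines the negated left multiplications `x ↦ -m x` with the
coadjoint action of the commutator bracket of `m`. -/
def IntertwinesCoad (m : A →ₗ[R] A →ₗ[R] A) (φ : A →ₗ[R] Dual R A) : Prop :=
  ∀ x, φ ∘ₗ (-m x) = commutatorCoad m x ∘ₗ φ

theorem isInvariantForm_iff_forall {m : A →ₗ[R] A →ₗ[R] A} {B : A →ₗ[R] Dual R A} :
    IsInvariantForm m B ↔ ∀ x y z, B (m x y) z = B y (m x z - m z x) :=
  Iff.rfl

theorem intertwinesCoad_iff_forall {m : A →ₗ[R] A →ₗ[R] A} {φ : A →ₗ[R] Dual R A} :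
    IntertwinesCoad m φ ↔ ∀ x y z, φ (-m x y) z = -φ y (m x z - m z x) := by
  simp [IntertwinesCoad, LinearMap.ext_iff, commutatorCoad, commutatorAd, Dual.transpose_apply]

theorem isInvariantForm_iff_intertwinesCoad {m : A →ₗ[R] A →ₗ[R] A} {B : A →ₗ[R] Dual R A} :
    IsInvariantForm m B ↔ IntertwinesCoad m B := by
  simp only [isInvariantForm_iff_forall, intertwinesCoad_iff_forall, map_neg, LinearMap.neg_apply,
    neg_inj]

end CommRing

section Field

variable {K A : Type*} [Field K] [AddCommGroup A] [Module K A] [FiniteDimensional K A]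

theorem separatingLeft_iff_exists_linearEquiv {B : A →ₗ[K] Dual K A} :
    B.SeparatingLeft ↔ ∃ φ : A ≃ₗ[K] Dual K A, φ.toLinearMap = B := by
  rw [separatingLeft_iff_ker_eq_bot]
  constructor
  · intro hB
    exact ⟨B.linearEquivOfInjective (ker_eq_bot.mp hB) Subspace.dual_finrank_eq.symm, rfl⟩
  · rintro ⟨φ, rfl⟩
    exact φ.ker

theorem nondegenerate_invariant_form_iff_equivalent_reps_general {ι : Sort*}
    (m : ι → A →ₗ[K] A →ₗ[K] A) :
    (∃ B : A →ₗ[K] Dual K A, B.SeparatingLeft ∧ ∀ i, IsInvariantForm (m i) B) ↔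
      ∃ φ : A ≃ₗ[K] Dual K A, ∀ i, IntertwinesCoad (m i) φ.toLinearMap := by
  simp only [separatingLeft_iff_exists_linearEquiv, isInvariantForm_iff_intertwinesCoad]
  constructor
  · rintro ⟨_, ⟨φ, rfl⟩, hφ⟩
    exact ⟨φ, hφ⟩
  · rintro ⟨φ, hφ⟩
    exact ⟨φ, ⟨φ, rfl⟩, hφ⟩

end Field

/-- Let `(A,∘ = c,∗ = s)` be a finite-dimensional compatible
anti-pre-Lie algebra over `ℂ`. There exists a nondegenerate invariant bilinear form on
`(A,∘,∗)` iff there is a linear isomorphism `φ : A ≃ A*` with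
`φ(−L∘(x)y) = ad₁*(x)φ(y)` and `φ(−L∗(x)y) = ad₂*(x)φ(y)`, i.e. pointwise
`φ(−(x∘y))(z) = −φ(y)([x,z]₁)` and `φ(−(x∗y))(z) = −φ(y)([x,z]₂)`. -/
theorem nondegenerate_invariant_form_iff_equivalent_reps {A : Type*} [AddCommGroup A]
    [Module ℂ A] [FiniteDimensional ℂ A]
    (c s : A →ₗ[ℂ] A →ₗ[ℂ] A)
    (h : ∀ k₁ k₂ : ℂ, IsAntiPreLie (k₁ • c + k₂ • s)) :
    (∃ B : A →ₗ[ℂ] A →ₗ[ℂ] ℂ,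
      (∀ x : A, (∀ y : A, B x y = 0) → x = 0) ∧
      (∀ x y z : A, B (c x y) z = B y (c x z - c z x)) ∧
      (∀ x y z : A, B (s x y) z = B y (s x z - s z x))) ↔
    (∃ φ : A ≃ₗ[ℂ] Module.Dual ℂ A,
      (∀ x y z : A, φ (-(c x y)) z = -(φ y (c x z - c z x))) ∧
      (∀ x y z : A, φ (-(s x y)) z = -(φ y (s x z - s z x)))) := by
  simpa [Fin.forall_fin_two, isInvariantForm_iff_forall, intertwinesCoad_iff_forall, SeparatingLeft]
    using nondegenerate_invariant_form_iff_equivalent_reps_general ![c, s]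
end

section
/- Let (A,∘,∗) be a finite-dimensional compatible anti-pre-Lie algebra over ℂ with commutator brackets [x,y]₁ = x∘y−y∘x and [x,y]₂ = x∗y−y∗x. Define, on the direct sum A ⊕ A*, the brackets [x+a*, y+b*]ᵢ = [x,y]ᵢ − Lᵢ*(x)b* + Lᵢ*(y)a* (i = 1,2), where ⟨L₁*(x)a*, y⟩ = −⟨a*, x∘y⟩ and ⟨L₂*(x)a*, y⟩ = −⟨a*, x∗y⟩ (so the A*-part is acted on by −L∘* and −L∗*), and define the bilinear form B(x+a*, y+b*) = ⟨x,b*⟩ + ⟨a*,y⟩. Then B is symmetric, nondegenerate, and is a commutative 2-cocycle on A ⊕ A* for every bracket k₁[-,-]₁ + k₂[-,-]₂ with k₁,k₂ ∈ ℂ. -/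
/-!
The brackets `k₁[-,-]₁ + k₂[-,-]₂` are the semidirect-product brackets of the single operations
`k₁∘ + k₂∗`, so one operation `x·y` is enough. For it,
`B([p, q], r) = T(p, q, r) - T(q, p, r)` with
`T(x + a*, y + b*, z + c*) = ⟨c*, x·y⟩ + ⟨b*, x·z⟩`. As `T` is symmetric in its last two arguments,
the cyclic sum telescopes.
-/

section CommutativeTwoCocycle

variable {R V : Type*} [CommRing R] [AddCommGroup V] [Module R V]

/-- A commutative 2-cocycle on a module with a bracket: a symmetric bilinear form satisfying the
cyclic identity. The bracket is a bare function, so that the notion also applies to brackets not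
known to satisfy the Lie algebra axioms. -/
structure IsCommutativeTwoCocycle (br : V → V → V) (B : LinearMap.BilinForm R V) : Prop where
  isSymm : B.IsSymm
  cyclic : ∀ x y z, B (br x y) z + B (br y z) x + B (br z x) y = 0

theorem IsCommutativeTwoCocycle.of_eq_sub {br : V → V → V} {B : LinearMap.BilinForm R V}
    (hB : B.IsSymm) {T : V → V → V → R} (hT : ∀ x y z, T x y z = T x z y)
    (hbr : ∀ x y z, B (br x y) z = T x y z - T y x z) :
    IsCommutativeTwoCocycle br B where
  isSymm := hB
  cyclic x y z :=
    calc B (br x y) z + B (br y z) x + B (br z x) y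
      _ = (T x y z - T y x z) + (T y z x - T z y x) + (T z x y - T x z y) := by simp only [hbr]
      _ = (T x y z - T y x z) + (T y x z - T z x y) + (T z x y - T x y z) := by
        rw [hT y z x, hT z y x, hT x z y]
      _ = 0 := by abel

end CommutativeTwoCocycle

section ProdDual

variable (R A : Type*) [CommRing R] [AddCommGroup A] [Module R A]

/-- The canonical pairing `B(x + a*, y + b*) = ⟨x, b*⟩ + ⟨a*, y⟩` on `A ⊕ A*`. It is Mathlib's
`LinearMap.dualProd`, which lives on `A* ⊕ A`, with the summands exchanged. -/
def prodDual : LinearMap.BilinForm R (A × Module.Dual R A) :=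
  LinearMap.BilinForm.congr (LinearEquiv.prodComm R (Module.Dual R A) A) (LinearMap.dualProd R A)

variable {R A}

theorem prodDual_apply_apply (p q : A × Module.Dual R A) :
    prodDual R A p q = q.2 p.1 + p.2 q.1 := rfl

variable (R A)

theorem isSymm_prodDual : (prodDual R A).IsSymm :=
  ⟨fun p q => (LinearMap.isSymm_dualProd R A).eq p.swap q.swap⟩

theorem separatingLeft_prodDual :
    (prodDual R A).SeparatingLeft ↔ Function.Injective (Module.Dual.eval R A) :=
  (LinearMap.separatingLeft_congr_iff (LinearEquiv.prodComm R (Module.Dual R A) A)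
    (LinearEquiv.prodComm R (Module.Dual R A) A)).trans (LinearMap.separatingLeft_dualProd R A)

end ProdDual

section DualSemidirectBracket

variable {R A : Type*} [CommRing R] [AddCommGroup A] [Module R A]

/-- The bracket of the semidirect product `A ⋉ A*` attached to an operation `m` on `A`: the
commutator of `m` on `A`, which acts on `A*` by `-L*`. With the sign in `L*`, the operator
`-L*(x)` is the transpose of `m x`. -/
def dualSemidirectBracket (m : A →ₗ[R] A →ₗ[R] A) (p q : A × Module.Dual R A) :
    A × Module.Dual R A :=
  (m p.1 q.1 - m q.1 p.1, q.2 ∘ₗ m p.1 - p.2 ∘ₗ m q.1)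

theorem dualSemidirectBracket_add (m n : A →ₗ[R] A →ₗ[R] A) (p q : A × Module.Dual R A) :
    dualSemidirectBracket (m + n) p q =
      dualSemidirectBracket m p q + dualSemidirectBracket n p q := by
  simp only [dualSemidirectBracket, LinearMap.add_apply, LinearMap.comp_add, add_sub_add_comm,
    Prod.mk_add_mk]

theorem dualSemidirectBracket_smul (k : R) (m : A →ₗ[R] A →ₗ[R] A) (p q : A × Module.Dual R A) :
    dualSemidirectBracket (k • m) p q = k • dualSemidirectBracket m p q := by
  simp only [dualSemidirectBracket, LinearMap.smul_apply, LinearMap.comp_smul, smul_sub,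
    Prod.smul_mk]

theorem prodDual_dualSemidirectBracket (m : A →ₗ[R] A →ₗ[R] A) (p q r : A × Module.Dual R A) :
    prodDual R A (dualSemidirectBracket m p q) r =
      (r.2 (m p.1 q.1) + q.2 (m p.1 r.1)) - (r.2 (m q.1 p.1) + p.2 (m q.1 r.1)) := by
  simp only [prodDual_apply_apply, dualSemidirectBracket, map_sub, LinearMap.sub_apply,
    LinearMap.comp_apply]
  abel

theorem isCommutativeTwoCocycle_prodDual (m : A →ₗ[R] A →ₗ[R] A) :
    IsCommutativeTwoCocycle (dualSemidirectBracket m) (prodDual R A) :=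
  .of_eq_sub (isSymm_prodDual R A) (T := fun p q r => r.2 (m p.1 q.1) + q.2 (m p.1 r.1))
    (fun _ _ _ => add_comm _ _) (prodDual_dualSemidirectBracket m)

end DualSemidirectBracket

theorem semidirect_commutative_two_cocycle_general {R A : Type*} [CommRing R] [AddCommGroup A]
    [Module R A] (hA : Function.Injective (Module.Dual.eval R A))
    (c s : A →ₗ[R] A →ₗ[R] A)
    (br₁ br₂ : (A × Module.Dual R A) → (A × Module.Dual R A) → (A × Module.Dual R A))
    (hbr₁ : ∀ p q : A × Module.Dual R A,
      br₁ p q = (c p.1 q.1 - c q.1 p.1, q.2 ∘ₗ c p.1 - p.2 ∘ₗ c q.1))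
    (hbr₂ : ∀ p q : A × Module.Dual R A,
      br₂ p q = (s p.1 q.1 - s q.1 p.1, q.2 ∘ₗ s p.1 - p.2 ∘ₗ s q.1))
    (Bf : (A × Module.Dual R A) → (A × Module.Dual R A) → R)
    (hBf : ∀ p q : A × Module.Dual R A, Bf p q = q.2 p.1 + p.2 q.1) :
    (∀ p q : A × Module.Dual R A, Bf p q = Bf q p) ∧
    (∀ p : A × Module.Dual R A, (∀ q : A × Module.Dual R A, Bf p q = 0) → p = 0) ∧
    (∀ (k₁ k₂ : R) (p q r : A × Module.Dual R A),
      Bf (k₁ • br₁ p q + k₂ • br₂ p q) r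
        + Bf (k₁ • br₁ q r + k₂ • br₂ q r) p
        + Bf (k₁ • br₁ r p + k₂ • br₂ r p) q = 0) := by
  obtain rfl : br₁ = dualSemidirectBracket c := funext₂ hbr₁
  obtain rfl : br₂ = dualSemidirectBracket s := funext₂ hbr₂
  obtain rfl : Bf = fun p q => prodDual R A p q := funext₂ hBf
  refine ⟨(isSymm_prodDual R A).eq, (separatingLeft_prodDual R A).mpr hA, fun k₁ k₂ p q r => ?_⟩
  simp only [← dualSemidirectBracket_smul, ← dualSemidirectBracket_add]
  exact (isCommutativeTwoCocycle_prodDual (k₁ • c + k₂ • s)).cyclic p q r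

/-- Let `(A,∘ = c,∗ = s)` be a finite-dimensional compatible
anti-pre-Lie algebra. On `A ⊕ A*`, with the semidirect-product brackets
`[x+a*, y+b*]ᵢ = [x,y]ᵢ − Lᵢ*(x)b* + Lᵢ*(y)a*` (where `⟨L₁*(x)a*, y⟩ = −⟨a*, x∘y⟩`
and `⟨L₂*(x)a*, y⟩ = −⟨a*, x∗y⟩`), the form `B(x+a*, y+b*) = ⟨x,b*⟩ + ⟨a*,y⟩` is
symmetric, nondegenerate and a commutative 2-cocycle for every linear combination
`k₁[-,-]₁ + k₂[-,-]₂` of the two brackets. -/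
theorem semidirect_commutative_two_cocycle {A : Type*} [AddCommGroup A] [Module ℂ A]
    [FiniteDimensional ℂ A]
    (c s : A →ₗ[ℂ] A →ₗ[ℂ] A)
    (h : ∀ k₁ k₂ : ℂ, IsAntiPreLie (k₁ • c + k₂ • s))
    (br₁ br₂ : (A × Module.Dual ℂ A) → (A × Module.Dual ℂ A) → (A × Module.Dual ℂ A))
    (hbr₁ : ∀ p q : A × Module.Dual ℂ A,
      br₁ p q = (c p.1 q.1 - c q.1 p.1, q.2 ∘ₗ c p.1 - p.2 ∘ₗ c q.1))
    (hbr₂ : ∀ p q : A × Module.Dual ℂ A,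
      br₂ p q = (s p.1 q.1 - s q.1 p.1, q.2 ∘ₗ s p.1 - p.2 ∘ₗ s q.1))
    (Bf : (A × Module.Dual ℂ A) → (A × Module.Dual ℂ A) → ℂ)
    (hBf : ∀ p q : A × Module.Dual ℂ A, Bf p q = q.2 p.1 + p.2 q.1) :
    (∀ p q : A × Module.Dual ℂ A, Bf p q = Bf q p) ∧
    (∀ p : A × Module.Dual ℂ A, (∀ q : A × Module.Dual ℂ A, Bf p q = 0) → p = 0) ∧
    (∀ (k₁ k₂ : ℂ) (p q r : A × Module.Dual ℂ A),
      Bf (k₁ • br₁ p q + k₂ • br₂ p q) r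
        + Bf (k₁ • br₁ q r + k₂ • br₂ q r) p
        + Bf (k₁ • br₁ r p + k₂ • br₂ r p) q = 0) :=
  semidirect_commutative_two_cocycle_general (Module.eval_apply_injective ℂ)
    c s br₁ br₂ hbr₁ hbr₂ Bf hBf
end

section
/- Let A be a complex vector space, B a symmetric bilinear form on A, and s₁, s₂ ∈ A fixed vectors. Define bilinear operations by x∘y = B(x,y)s₁ − B(x,s₁)y and x∗y = B(x,y)s₂ − B(x,s₂)y. Then (A,∘,∗) is a compatible anti-pre-Lie algebra: (A,∘) and (A,∗) are anti-pre-Lie algebras and every linear combination k₁∘+k₂∗ (k₁,k₂ ∈ ℂ) is an anti-pre-Lie operation. -/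
/-- An anti-pre-Lie operation, stated for a plain binary operation. -/
def IsAntiPreLieFn {A : Type*} [AddCommGroup A] [Module ℂ A] (m : A → A → A) : Prop :=
  (∀ x y z : A, m x (m y z) - m y (m x z) = m (m y x - m x y) z) ∧
  (∀ x y z : A, m (m x y - m y x) z + m (m y z - m z y) x + m (m z x - m x z) y = 0)

/-!
The product `x ∗ y = B(x,y)s − B(x,s)y` depends linearly on `s`, so a linear combination of two
such products is the product attached to the combined vector, and it is enough to treat a single
`s`.

Symmetry of `B` removes `s` from the commutator: `[x,y] = B(y,s)x − B(x,s)y`. Multiplying by `z`,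
the multiples of `z` cancel and `[x,y] ∗ z = (B(y,s)B(x,z) − B(x,s)B(y,z))s`. The same coefficient,
with the opposite sign, appears in `x ∗ (y ∗ z) − y ∗ (x ∗ z)`, and its cyclic sum vanishes.
-/

section

variable {R A : Type*} [CommRing R] [AddCommGroup A] [Module R A]

/-- Anti-pre-Lie operations on a module over a commutative ring. The operation is bundled as a
bilinear map, and brackets are written out as differences of products. -/
structure IsAntiPreLie_s18 (m : A →ₗ[R] A →ₗ[R] A) : Prop where
  mul_mul_sub : ∀ x y z : A, m x (m y z) - m y (m x z) = m (m y x - m x y) z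
  cyclic_sum : ∀ x y z : A,
    m (m x y - m y x) z + m (m y z - m z y) x + m (m z x - m x z) y = 0

/-- Compatible pairs of anti-pre-Lie operations: both are anti-pre-Lie, and so is every linear
combination of them. -/
structure IsCompatibleAntiPreLie (m n : A →ₗ[R] A →ₗ[R] A) : Prop where
  left : IsAntiPreLie_s18 m
  right : IsAntiPreLie_s18 n
  smul_add_smul : ∀ k₁ k₂ : R, IsAntiPreLie_s18 (k₁ • m + k₂ • n)

/-- The product `x ∗ y = B(x,y)s − B(x,s)y` that a bilinear form `B` attaches to a vector `s`,
bundled as a map linear in `s`, `x` and `y`, in this order. -/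
def formProduct (B : LinearMap.BilinForm R A) : A →ₗ[R] A →ₗ[R] A →ₗ[R] A where
  toFun s := LinearMap.mk₂ R (fun x y => B x y • s - B x s • y)
    (fun x x' y => by simp only [map_add, LinearMap.add_apply]; module)
    (fun k x y => by simp only [map_smul, LinearMap.smul_apply, smul_eq_mul]; module)
    (fun x y y' => by simp only [map_add]; module)
    (fun k x y => by simp only [map_smul, smul_eq_mul]; module)
  map_add' s t := by
    ext x y
    simp only [LinearMap.mk₂_apply, LinearMap.add_apply, map_add]
    module
  map_smul' k s := by
    ext x y
    simp only [LinearMap.mk₂_apply, LinearMap.smul_apply, map_smul, smul_eq_mul, RingHom.id_apply]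
    module

variable (B : LinearMap.BilinForm R A)

theorem formProduct_apply (s x y : A) : formProduct B s x y = B x y • s - B x s • y :=
  rfl

theorem formProduct_mul_mul_sub (s x y z : A) :
    formProduct B s x (formProduct B s y z) - formProduct B s y (formProduct B s x z) =
      (B x s * B y z - B y s * B x z) • s := by
  simp only [formProduct_apply, map_sub, map_smul]
  module

variable {B}

theorem formProduct_sub_swap (hB : B.IsSymm) (s x y : A) :
    formProduct B s x y - formProduct B s y x = B y s • x - B x s • y := by
  rw [formProduct_apply, formProduct_apply, hB.eq y x]
  module

theorem formProduct_commutator_mul (hB : B.IsSymm) (s x y z : A) :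
    formProduct B s (formProduct B s x y - formProduct B s y x) z =
      (B y s * B x z - B x s * B y z) • s := by
  rw [formProduct_sub_swap hB]
  simp only [formProduct_apply, map_sub, map_smul, LinearMap.sub_apply, LinearMap.smul_apply]
  module

theorem isAntiPreLie_formProduct (hB : B.IsSymm) (s : A) : IsAntiPreLie_s18 (formProduct B s) where
  mul_mul_sub x y z := by
    rw [formProduct_mul_mul_sub, formProduct_commutator_mul hB]
  cyclic_sum x y z := by
    simp only [formProduct_commutator_mul hB]
    rw [hB.eq y x, hB.eq z x, hB.eq z y]
    module

theorem bilinear_form_gives_compatible_antiPreLie_general (hB : B.IsSymm) (s₁ s₂ : A) :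
    IsCompatibleAntiPreLie (formProduct B s₁) (formProduct B s₂) where
  left := isAntiPreLie_formProduct hB s₁
  right := isAntiPreLie_formProduct hB s₂
  smul_add_smul k₁ k₂ := by
    simpa only [map_add, map_smul] using isAntiPreLie_formProduct hB (k₁ • s₁ + k₂ • s₂)

end

theorem IsAntiPreLie_s18.isAntiPreLieFn {A : Type*} [AddCommGroup A] [Module ℂ A]
    {m : A →ₗ[ℂ] A →ₗ[ℂ] A} (hm : IsAntiPreLie_s18 m) : IsAntiPreLieFn (fun x y => m x y) :=
  ⟨hm.mul_mul_sub, hm.cyclic_sum⟩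

/-- Let `B` be a symmetric bilinear form on a complex vector space `A`
and `s₁ s₂ ∈ A`. The operations `x∘y = B(x,y)s₁ − B(x,s₁)y` and
`x∗y = B(x,y)s₂ − B(x,s₂)y` make `(A,∘,∗)` a compatible anti-pre-Lie algebra: both
are anti-pre-Lie operations, and so is every linear combination of them. -/
theorem bilinear_form_gives_compatible_antiPreLie {A : Type*} [AddCommGroup A]
    [Module ℂ A] (B : A →ₗ[ℂ] A →ₗ[ℂ] ℂ)
    (hsym : ∀ x y : A, B x y = B y x) (s₁ s₂ : A)
    (c st : A → A → A)
    (hc : ∀ x y : A, c x y = B x y • s₁ - B x s₁ • y)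
    (hst : ∀ x y : A, st x y = B x y • s₂ - B x s₂ • y) :
    IsAntiPreLieFn c ∧ IsAntiPreLieFn st ∧
    (∀ k₁ k₂ : ℂ, IsAntiPreLieFn (fun x y => k₁ • c x y + k₂ • st x y)) := by
  obtain rfl : c = fun x y => formProduct B s₁ x y := funext₂ hc
  obtain rfl : st = fun x y => formProduct B s₂ x y := funext₂ hst
  have h := bilinear_form_gives_compatible_antiPreLie_general ⟨hsym⟩ s₁ s₂
  exact ⟨h.left.isAntiPreLieFn, h.right.isAntiPreLieFn,
    fun k₁ k₂ => (h.smul_add_smul k₁ k₂).isAntiPreLieFn⟩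
end
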